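/- arXiv:1301.1442 — 2 statements merged into one kernel-verified Lean document; each statement's English description precedes it below -/
import Mathlib

section
/- Φ is injective on PSL(2,ℝ) with image SO⁺(2,1): for A, B ∈ SL(2,ℝ), Φ(A) = Φ(B) implies A = B or A = −B; and for every M ∈ M₃(ℝ) with MᵀJM = J, det M = 1 and M₃₃ > 0 (where J := diag(1,1,−1)) there exists A ∈ SL(2,ℝ) with Φ(A) = M. -/
/-
`Φ(A)` is the matrix of `S ↦ A S Aᵀ` on symmetric `2 × 2` matrices, and the forward null vectors of
the Lorentz form are exactly the squares `x xᵀ` of spinors `x ∈ ℝ²`, each with the two roots `±x`.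
If `Φ(A) = Φ(B)`, then `A x = ± B x` for every `x`, and the sign does not depend on `x` because `ℝ²`
is not a union of two proper subspaces. Conversely, a proper Lorentz similitude `M` preserving the
forward cone sends the squares of the two basis spinors to squares of some `u` and `w`; up to the
sign of `w`, the matrix `A` with columns `u`, `w` has the right determinant. Then `Φ(A)` and `M`
agree on a plane, and a proper similitude is determined by two of its columns.
-/

open Matrix

/-- The map `Φ` from 2×2 real matrices to 3×3 real matrices, given on
`A = (a,b;c,d)` by the explicit formula of Kim. -/
noncomputable def Phi (A : Matrix (Fin 2) (Fin 2) ℝ) : Matrix (Fin 3) (Fin 3) ℝ :=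
  let a := A 0 0; let b := A 0 1; let c := A 1 0; let d := A 1 1
  !![a * d + b * c, a * c - b * d, a * c + b * d;
     a * b - c * d, (a ^ 2 - b ^ 2 - c ^ 2 + d ^ 2) / 2,
       (a ^ 2 + b ^ 2 - c ^ 2 - d ^ 2) / 2;
     a * b + c * d, (a ^ 2 - b ^ 2 + c ^ 2 - d ^ 2) / 2,
       (a ^ 2 + b ^ 2 + c ^ 2 + d ^ 2) / 2]

/-- The matrix `J = diag(1,1,-1)` of the Lorentz form `x₁² + x₂² - x₃²`. -/
def Jmat : Matrix (Fin 3) (Fin 3) ℝ := !![1, 0, 0; 0, 1, 0; 0, 0, -1]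

section

variable {l m n R : Type*}

theorem mul_transpose_mul_eq_smul {K : Type*} [Field K] [Fintype n] [DecidableEq n] {s : K}
    {J M : Matrix n n K} (hs : s ≠ 0) (hJ : J * J = 1) (h : Mᵀ * J * M = s • J) :
    M * J * Mᵀ = s • J := by
  have hleft : (s⁻¹ • (J * Mᵀ * J)) * M = 1 := by
    rw [smul_mul_assoc, Matrix.mul_assoc J, Matrix.mul_assoc J, h, mul_smul_comm, hJ,
      inv_smul_smul₀ hs]
  have hright : M * J * Mᵀ * J = s • 1 := by
    rw [← mul_eq_one_comm.1 hleft, mul_smul_comm, smul_inv_smul₀ hs]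
    simp only [Matrix.mul_assoc]
  calc M * J * Mᵀ = M * J * Mᵀ * J * J := by rw [Matrix.mul_assoc _ J J, hJ, Matrix.mul_one]
    _ = s • J := by rw [hright, smul_mul_assoc, Matrix.one_mul]

theorem det_smul_mul_transpose_mul_eq_smul_adjugate [CommRing R] [Fintype n] [DecidableEq n]
    {s : R} {J M : Matrix n n R} (hJ : J * J = 1) (h : Mᵀ * J * M = s • J) :
    M.det • (J * Mᵀ * J) = s • M.adjugate := by
  calc M.det • (J * Mᵀ * J) = J * Mᵀ * J * (M * M.adjugate) := by
        rw [mul_adjugate, mul_smul_comm, Matrix.mul_one]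
    _ = J * (Mᵀ * J * M) * M.adjugate := by simp only [Matrix.mul_assoc]
    _ = s • M.adjugate := by rw [h, mul_smul_comm, hJ, smul_mul_assoc, Matrix.one_mul]

theorem adjugate_apply_congr [CommRing R] [Fintype n] [DecidableEq n] {M N : Matrix n n R} {k : n}
    (h : ∀ j ≠ k, M.col j = N.col j) (i : n) : M.adjugate k i = N.adjugate k i := by
  rw [← transpose_apply M.adjugate, ← transpose_apply N.adjugate, adjugate_transpose,
    adjugate_transpose, adjugate_apply, adjugate_apply]
  congr 1
  ext j a
  by_cases hj : j = k
  · simp [hj]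
  · simpa [hj] using congrFun (h j hj) a

theorem mulVec_dotProduct_mulVec_mulVec [CommSemiring R] [Fintype n] {s : R} {J M : Matrix n n R}
    (h : Mᵀ * J * M = s • J) (x y : n → R) :
    (M *ᵥ x) ⬝ᵥ J *ᵥ (M *ᵥ y) = s * (x ⬝ᵥ J *ᵥ y) := by
  rw [← vecMul_transpose, ← dotProduct_mulVec, mulVec_mulVec, mulVec_mulVec, h,
    smul_mulVec, dotProduct_smul, smul_eq_mul]

theorem eq_zero_or_eq_zero_of_forall_mulVec [NonAssocSemiring R] [Fintype n] {P : Matrix l n R}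
    {Q : Matrix m n R} (h : ∀ x, P *ᵥ x = 0 ∨ Q *ᵥ x = 0) : P = 0 ∨ Q = 0 := by
  by_contra! hne
  obtain ⟨x, hx⟩ : ∃ x, P *ᵥ x ≠ 0 := by
    by_contra! hP
    exact hne.1 (mulVec_injective (funext fun x => by rw [hP, zero_mulVec]))
  obtain ⟨y, hy⟩ : ∃ y, Q *ᵥ y ≠ 0 := by
    by_contra! hQ
    exact hne.2 (mulVec_injective (funext fun y => by rw [hQ, zero_mulVec]))
  have hQx := (h x).resolve_left hx
  have hPy := (h y).resolve_right hy
  rcases h (x + y) with hxy | hxy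
  · exact hx (by simpa [mulVec_add, hPy] using hxy)
  · exact hy (by simpa [mulVec_add, hQx] using hxy)

theorem eq_or_eq_neg_of_vecMulVec_self_eq [CommRing R] [NoZeroDivisors R] {x y : n → R}
    (h : vecMulVec x x = vecMulVec y y) : x = y ∨ x = -y := by
  have hmul (i j : n) : x i * x j = y i * y j := congrFun (congrFun h i) j
  by_cases hx : x = 0
  · left
    ext i
    simpa [hx, eq_comm] using hmul i i
  obtain ⟨k, hk⟩ := Function.ne_iff.1 hx
  rcases mul_self_eq_mul_self_iff.1 (hmul k k) with hxy | hxy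
  · left
    ext i
    exact mul_left_cancel₀ hk (by rw [hmul, hxy])
  · right
    ext i
    exact mul_left_cancel₀ hk (by rw [hmul, hxy, Pi.neg_apply, neg_mul_neg])

end

theorem Jmat_eq_diagonal : Jmat = diagonal ![1, 1, -1] := by
  ext i j
  fin_cases i <;> fin_cases j <;> rfl

theorem Jmat_mul_Jmat : Jmat * Jmat = 1 := by
  rw [Jmat_eq_diagonal, diagonal_mul_diagonal, ← diagonal_one]
  congr 1
  ext i
  fin_cases i <;> simp

theorem dotProduct_Jmat_mulVec (x y : Fin 3 → ℝ) :
    x ⬝ᵥ Jmat *ᵥ y = x 0 * y 0 + x 1 * y 1 - x 2 * y 2 := by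
  simp [Jmat_eq_diagonal, mulVec_diagonal, dotProduct, Fin.sum_univ_three, sub_eq_add_neg]

/-- The proper similitudes of ratio `δ` of the Lorentz form. For `δ = 1` this is `SO(2,1)`; the
ratio is signed, and the image under `Phi` of a matrix of determinant `δ` is one of these. -/
structure IsLorentzSimilitude (δ : ℝ) (M : Matrix (Fin 3) (Fin 3) ℝ) : Prop where
  transpose_mul_Jmat_mul : Mᵀ * Jmat * M = δ ^ 2 • Jmat
  det_eq : M.det = δ ^ 3

namespace IsLorentzSimilitude

variable {δ : ℝ} {M N : Matrix (Fin 3) (Fin 3) ℝ}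

theorem smul_Jmat_mul_transpose_mul_Jmat (hM : IsLorentzSimilitude δ M) (hδ : δ ≠ 0) :
    δ • (Jmat * Mᵀ * Jmat) = M.adjugate := by
  have h := det_smul_mul_transpose_mul_eq_smul_adjugate Jmat_mul_Jmat hM.transpose_mul_Jmat_mul
  rw [hM.det_eq, pow_succ, mul_smul] at h
  exact smul_right_injective _ (pow_ne_zero 2 hδ) h

theorem eq_of_col_eq (hM : IsLorentzSimilitude δ M) (hN : IsLorentzSimilitude δ N) (hδ : δ ≠ 0)
    {k : Fin 3} (h : ∀ j ≠ k, M.col j = N.col j) : M = N := by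
  have hrow : (Jmat * Mᵀ * Jmat).row k = (Jmat * Nᵀ * Jmat).row k := by
    ext i
    have hadj := adjugate_apply_congr h i
    rw [← hM.smul_Jmat_mul_transpose_mul_Jmat hδ, ← hN.smul_Jmat_mul_transpose_mul_Jmat hδ] at hadj
    exact mul_left_cancel₀ hδ hadj
  have hcol : M.col k = N.col k := by
    ext i
    have hi := congrFun hrow i
    simp only [row_apply, Jmat_eq_diagonal, mul_diagonal, diagonal_mul, transpose_apply] at hi
    fin_cases k <;> fin_cases i <;> simpa using hi
  ext i j
  by_cases hj : j = k
  · exact hj ▸ congrFun hcol i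
  · exact congrFun (h j hj) i

theorem sq_add_sq_le (hM : IsLorentzSimilitude δ M) (hδ : δ ≠ 0) :
    M 2 0 ^ 2 + M 2 1 ^ 2 ≤ M 2 2 ^ 2 := by
  have h := mul_transpose_mul_eq_smul (pow_ne_zero 2 hδ) Jmat_mul_Jmat hM.transpose_mul_Jmat_mul
  have h22 : M 2 0 * M 2 0 + M 2 1 * M 2 1 - M 2 2 * M 2 2 = -δ ^ 2 := by
    simpa [Jmat_eq_diagonal, mul_apply, Fin.sum_univ_three, sub_eq_add_neg] using
      congrFun (congrFun h 2) 2
  linarith [sq_nonneg δ]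

theorem mulVec_two_nonneg (hM : IsLorentzSimilitude δ M) (hδ : δ ≠ 0) (hpos : 0 < M 2 2)
    {v : Fin 3 → ℝ} (hv : v ⬝ᵥ Jmat *ᵥ v ≤ 0) (hv2 : 0 ≤ v 2) : 0 ≤ (M *ᵥ v) 2 := by
  rw [dotProduct_Jmat_mulVec] at hv
  have hv' : v 0 ^ 2 + v 1 ^ 2 ≤ v 2 ^ 2 := by linarith
  have cauchy_schwarz : (M 2 0 * v 0 + M 2 1 * v 1) ^ 2 ≤ (M 2 2 * v 2) ^ 2 := calc
    _ ≤ (M 2 0 ^ 2 + M 2 1 ^ 2) * (v 0 ^ 2 + v 1 ^ 2) := by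
      linarith [sq_nonneg (M 2 0 * v 1 - M 2 1 * v 0)]
    _ ≤ M 2 2 ^ 2 * v 2 ^ 2 := by gcongr; exact hM.sq_add_sq_le hδ
    _ = (M 2 2 * v 2) ^ 2 := by ring
  have habs := abs_le_of_sq_le_sq' cauchy_schwarz (by positivity)
  simp only [mulVec, dotProduct, Fin.sum_univ_three]
  linarith [habs.1]

end IsLorentzSimilitude

/-- The square of a spinor `x`: the vector `v` of `ℝ³` with
`x xᵀ = !![v 2 + v 1, v 0; v 0, v 2 - v 1]`. The determinant of such a matrix is minus the Lorentz
form of `v`, so squares of spinors are null vectors. -/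
noncomputable def spinorSq (x : Fin 2 → ℝ) : Fin 3 → ℝ :=
  ![x 0 * x 1, (x 0 ^ 2 - x 1 ^ 2) / 2, (x 0 ^ 2 + x 1 ^ 2) / 2]

theorem spinorSq_neg (x : Fin 2 → ℝ) : spinorSq (-x) = spinorSq x := by
  simp [spinorSq]

theorem spinorSq_two_nonneg (x : Fin 2 → ℝ) : 0 ≤ spinorSq x 2 := by
  change 0 ≤ (x 0 ^ 2 + x 1 ^ 2) / 2
  positivity

theorem eq_or_eq_neg_of_spinorSq_eq {x y : Fin 2 → ℝ} (h : spinorSq x = spinorSq y) :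
    x = y ∨ x = -y := by
  have h0 : x 0 * x 1 = y 0 * y 1 := congrFun h 0
  have h1 : (x 0 ^ 2 - x 1 ^ 2) / 2 = (y 0 ^ 2 - y 1 ^ 2) / 2 := congrFun h 1
  have h2 : (x 0 ^ 2 + x 1 ^ 2) / 2 = (y 0 ^ 2 + y 1 ^ 2) / 2 := congrFun h 2
  apply eq_or_eq_neg_of_vecMulVec_self_eq
  ext i j
  fin_cases i <;> fin_cases j <;> simp only [vecMulVec_apply, Fin.zero_eta, Fin.mk_one] <;> linarith

theorem spinorSq_dotProduct_Jmat_mulVec (x y : Fin 2 → ℝ) :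
    spinorSq x ⬝ᵥ Jmat *ᵥ spinorSq y = -(of ![x, y]).det ^ 2 / 2 := by
  rw [dotProduct_Jmat_mulVec, det_fin_two]
  simp only [spinorSq, of_apply, cons_val]
  ring

theorem spinorSq_dotProduct_Jmat_mulVec_self (x : Fin 2 → ℝ) :
    spinorSq x ⬝ᵥ Jmat *ᵥ spinorSq x = 0 := by
  rw [spinorSq_dotProduct_Jmat_mulVec, det_zero_of_row_eq zero_ne_one rfl]
  norm_num

theorem exists_spinorSq_eq {v : Fin 3 → ℝ} (hv : v ⬝ᵥ Jmat *ᵥ v = 0) (hv2 : 0 ≤ v 2) :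
    ∃ x, spinorSq x = v := by
  rw [dotProduct_Jmat_mulVec] at hv
  have hle : |v 1| ≤ v 2 := abs_le_of_sq_le_sq (by nlinarith [sq_nonneg (v 0)]) hv2
  obtain ⟨hneg, hpos⟩ := abs_le.1 hle
  have hs := Real.sq_sqrt (show 0 ≤ v 2 + v 1 by linarith)
  have ht := Real.sq_sqrt (show 0 ≤ v 2 - v 1 by linarith)
  have hst : (√(v 2 + v 1) * √(v 2 - v 1)) ^ 2 = v 0 ^ 2 := by
    rw [mul_pow, hs, ht]
    linarith
  obtain ⟨t, ht, hst⟩ : ∃ t, t ^ 2 = v 2 - v 1 ∧ √(v 2 + v 1) * t = v 0 := by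
    rcases sq_eq_sq_iff_eq_or_eq_neg.1 hst with h | h
    · exact ⟨_, ht, h⟩
    · exact ⟨-√(v 2 - v 1), by rw [neg_sq, ht], by rw [mul_neg, h, neg_neg]⟩
  refine ⟨![√(v 2 + v 1), t], ?_⟩
  ext i
  fin_cases i <;>
    simp only [spinorSq, cons_val, Fin.zero_eta, Fin.mk_one, Fin.reduceFinMk] <;> linarith

theorem spinorSq_single_add :
    spinorSq (Pi.single 0 1) + spinorSq (Pi.single 1 1) = Pi.single 2 1 := by
  ext i
  fin_cases i <;> norm_num [spinorSq, Pi.single_apply, Fin.ext_iff]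

theorem spinorSq_single_sub :
    spinorSq (Pi.single 0 1) - spinorSq (Pi.single 1 1) = Pi.single 1 1 := by
  ext i
  fin_cases i <;> norm_num [spinorSq, Pi.single_apply, Fin.ext_iff]

theorem Phi_mulVec_spinorSq (A : Matrix (Fin 2) (Fin 2) ℝ) (x : Fin 2 → ℝ) :
    Phi A *ᵥ spinorSq x = spinorSq (A *ᵥ x) := by
  ext i
  fin_cases i <;>
    simp only [Phi, spinorSq, mulVec, dotProduct, Fin.sum_univ_two, Fin.sum_univ_three, of_apply,
      cons_val', cons_val, Fin.zero_eta, Fin.mk_one, Fin.reduceFinMk] <;> ring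

theorem isLorentzSimilitude_Phi (A : Matrix (Fin 2) (Fin 2) ℝ) :
    IsLorentzSimilitude A.det (Phi A) where
  transpose_mul_Jmat_mul := by
    ext i j
    fin_cases i <;> fin_cases j <;>
      simp only [Phi, Jmat, det_fin_two, mul_apply, transpose_apply, Matrix.smul_apply, smul_eq_mul,
        Fin.sum_univ_three, of_apply, cons_val', cons_val, Fin.zero_eta, Fin.mk_one,
        Fin.reduceFinMk] <;> ring
  det_eq := by
    simp only [Phi, det_fin_three, det_fin_two, of_apply, cons_val', cons_val]
    ring

theorem abs_det_le_Phi_two_two (A : Matrix (Fin 2) (Fin 2) ℝ) : |A.det| ≤ Phi A 2 2 := by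
  change |A.det| ≤ (A 0 0 ^ 2 + A 0 1 ^ 2 + A 1 0 ^ 2 + A 1 1 ^ 2) / 2
  rw [det_fin_two, abs_le]
  constructor
  · linarith [sq_nonneg (A 0 0 + A 1 1), sq_nonneg (A 0 1 - A 1 0)]
  · linarith [sq_nonneg (A 0 0 - A 1 1), sq_nonneg (A 0 1 + A 1 0)]

theorem Phi_neg (A : Matrix (Fin 2) (Fin 2) ℝ) : Phi (-A) = Phi A := by
  simp [Phi]

theorem Phi_eq_Phi_iff {A B : Matrix (Fin 2) (Fin 2) ℝ} : Phi A = Phi B ↔ A = B ∨ A = -B := by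
  refine ⟨fun h => ?_, ?_⟩
  · have hspinor (x : Fin 2 → ℝ) : A *ᵥ x = B *ᵥ x ∨ A *ᵥ x = -(B *ᵥ x) := by
      apply eq_or_eq_neg_of_spinorSq_eq
      rw [← Phi_mulVec_spinorSq, h, Phi_mulVec_spinorSq]
    have hzero : A - B = 0 ∨ A + B = 0 := eq_zero_or_eq_zero_of_forall_mulVec fun x => by
      simpa only [sub_mulVec, add_mulVec, sub_eq_zero, add_eq_zero_iff_eq_neg] using hspinor x
    simpa only [sub_eq_zero, add_eq_zero_iff_eq_neg] using hzero
  · rintro (rfl | rfl)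
    exacts [rfl, Phi_neg B]

namespace IsLorentzSimilitude

variable {δ : ℝ} {M : Matrix (Fin 3) (Fin 3) ℝ}

theorem exists_spinorSq_eq_mulVec (hM : IsLorentzSimilitude δ M) (hδ : δ ≠ 0) (hpos : 0 < M 2 2)
    (x : Fin 2 → ℝ) : ∃ y, spinorSq y = M *ᵥ spinorSq x := by
  have hnull := spinorSq_dotProduct_Jmat_mulVec_self x
  apply exists_spinorSq_eq
  · rw [mulVec_dotProduct_mulVec_mulVec hM.transpose_mul_Jmat_mul, hnull, mul_zero]
  · exact hM.mulVec_two_nonneg hδ hpos hnull.le (spinorSq_two_nonneg x)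

theorem exists_det_eq_spinorSq_eq_mulVec (hM : IsLorentzSimilitude δ M) (hδ : δ ≠ 0)
    (hpos : 0 < M 2 2) : ∃ u w : Fin 2 → ℝ, (of ![u, w]).det = δ ∧
      spinorSq u = M *ᵥ spinorSq (Pi.single 0 1) ∧ spinorSq w = M *ᵥ spinorSq (Pi.single 1 1) := by
  obtain ⟨u, hu⟩ := hM.exists_spinorSq_eq_mulVec hδ hpos (Pi.single 0 1)
  obtain ⟨w, hw⟩ := hM.exists_spinorSq_eq_mulVec hδ hpos (Pi.single 1 1)
  have hsq : (of ![u, w]).det ^ 2 = δ ^ 2 := by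
    have h := mulVec_dotProduct_mulVec_mulVec hM.transpose_mul_Jmat_mul
      (spinorSq (Pi.single 0 1)) (spinorSq (Pi.single 1 1))
    rw [← hu, ← hw, spinorSq_dotProduct_Jmat_mulVec, spinorSq_dotProduct_Jmat_mulVec] at h
    have hone : (of ![Pi.single 0 1, Pi.single 1 1] : Matrix (Fin 2) (Fin 2) ℝ).det = 1 := by
      simp [det_fin_two]
    rw [hone] at h
    linarith
  rcases sq_eq_sq_iff_eq_or_eq_neg.1 hsq with hdet | hdet
  · exact ⟨u, w, hdet, hu, hw⟩
  · have hflip : (of ![u, -w]).det = -(of ![u, w]).det := by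
      simp only [det_fin_two, of_apply, cons_val, Pi.neg_apply]
      ring
    exact ⟨u, -w, by rw [hflip, hdet, neg_neg], hu, by rw [spinorSq_neg, hw]⟩

theorem eq_of_mulVec_spinorSq_single_eq {N : Matrix (Fin 3) (Fin 3) ℝ}
    (hM : IsLorentzSimilitude δ M) (hN : IsLorentzSimilitude δ N) (hδ : δ ≠ 0)
    (h : ∀ i, M *ᵥ spinorSq (Pi.single i 1) = N *ᵥ spinorSq (Pi.single i 1)) : M = N := by
  refine hM.eq_of_col_eq hN hδ (k := 0) fun j hj => ?_
  rw [← mulVec_single_one, ← mulVec_single_one]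
  fin_cases j
  · exact absurd rfl hj
  · change M *ᵥ Pi.single 1 1 = N *ᵥ Pi.single 1 1
    rw [← spinorSq_single_sub, mulVec_sub, mulVec_sub, h, h]
  · change M *ᵥ Pi.single 2 1 = N *ᵥ Pi.single 2 1
    rw [← spinorSq_single_add, mulVec_add, mulVec_add, h, h]

theorem exists_Phi_eq (hM : IsLorentzSimilitude δ M) (hδ : δ ≠ 0) (hpos : 0 < M 2 2) :
    ∃ A : Matrix (Fin 2) (Fin 2) ℝ, A.det = δ ∧ Phi A = M := by
  obtain ⟨u, w, hdet, hu, hw⟩ := hM.exists_det_eq_spinorSq_eq_mulVec hδ hpos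
  have hdet' : (of ![u, w])ᵀ.det = δ := by rw [det_transpose, hdet]
  refine ⟨(of ![u, w])ᵀ, hdet', ?_⟩
  refine eq_of_mulVec_spinorSq_single_eq (hdet' ▸ isLorentzSimilitude_Phi _) hM hδ fun i => ?_
  rw [Phi_mulVec_spinorSq, mulVec_single_one]
  fin_cases i
  exacts [hu, hw]

end IsLorentzSimilitude

theorem stmt9_general :
    (∀ A B : Matrix (Fin 2) (Fin 2) ℝ, Phi A = Phi B ↔ A = B ∨ A = -B) ∧
    (∀ δ : ℝ, δ ≠ 0 → ∀ M : Matrix (Fin 3) (Fin 3) ℝ,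
      (∃ A : Matrix (Fin 2) (Fin 2) ℝ, A.det = δ ∧ Phi A = M) ↔
        Mᵀ * Jmat * M = δ ^ 2 • Jmat ∧ M.det = δ ^ 3 ∧ 0 < M 2 2) := by
  refine ⟨fun _ _ => Phi_eq_Phi_iff, fun δ hδ M => ⟨?_, ?_⟩⟩
  · rintro ⟨A, rfl, rfl⟩
    obtain ⟨hform, hdet⟩ := isLorentzSimilitude_Phi A
    exact ⟨hform, hdet, (abs_pos.2 hδ).trans_le (abs_det_le_Phi_two_two A)⟩
  · rintro ⟨hform, hdet, hpos⟩
    exact IsLorentzSimilitude.exists_Phi_eq ⟨hform, hdet⟩ hδ hpos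

/-- `Φ` is injective on `PSL(2,ℝ)` (i.e. `Φ(A) = Φ(B)` forces `A = ±B`) and its
image is exactly `SO⁺(2,1)`. -/
theorem stmt9 :
    (∀ A B : Matrix (Fin 2) (Fin 2) ℝ, A.det = 1 → B.det = 1 →
      Phi A = Phi B → A = B ∨ A = -B) ∧
    (∀ M : Matrix (Fin 3) (Fin 3) ℝ, Mᵀ * Jmat * M = Jmat → M.det = 1 →
      0 < M 2 2 → ∃ A : Matrix (Fin 2) (Fin 2) ℝ, A.det = 1 ∧ Phi A = M) := by
  exact ⟨fun A B _ _ => (stmt9_general.1 A B).1, fun M hform hdet hpos =>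
    (stmt9_general.2 1 one_ne_zero M).2 ⟨by simpa using hform, by simpa using hdet, hpos⟩⟩
end

section
/- The parametrization f of the hyperboloid is Φ-equivariant: for every A = (a,b;c,d) ∈ SL(2,ℝ) and every z ∈ ℂ with Im z > 0, one has cz + d ≠ 0, the Möbius image w := (az+b)/(cz+d) satisfies Im w > 0, and f(w) = Φ(A)·f(z) (matrix–vector multiplication in ℝ³). -/
open Matrix

/-- The parametrization `f(x+iy) = (x/y, (x²+y²-1)/(2y), (x²+y²+1)/(2y))` of the
hyperboloid. -/
noncomputable def f (z : ℂ) : Fin 3 → ℝ :=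
  ![z.re / z.im, (z.re ^ 2 + z.im ^ 2 - 1) / (2 * z.im),
    (z.re ^ 2 + z.im ^ 2 + 1) / (2 * z.im)]

/-!
Identify `ℝ³` with the real symmetric `2 × 2` matrices. Then `Φ(A)` becomes the congruence
`S ↦ A S Aᵀ`, and `f z` becomes `(Im z)⁻¹ Re (u u*)`, where `u = (z, 1)` represents `z` in
homogeneous coordinates. Since `A u = (c z + d) (w, 1)` with `w = (a z + b) / (c z + d)`, congruence
by `A` sends `Re (u u*)` to `|c z + d|² Re ((w, 1) (w, 1)*)`, and this factor is absorbed by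
`Im w = det A · Im z / |c z + d|²`.
-/

open UpperHalfPlane

/-- The identification of `ℝ³` with the real symmetric `2 × 2` matrices that turns `Phi A` into
congruence by `A`. The determinant corresponds to the Lorentzian form `v₂² - v₁² - v₀²`. -/
def symmMatrix : (Fin 3 → ℝ) →ₗ[ℝ] Matrix (Fin 2) (Fin 2) ℝ where
  toFun v := !![v 2 + v 1, v 0; v 0, v 2 - v 1]
  map_add' v w := by
    ext i j
    fin_cases i <;> fin_cases j <;> simp <;> ring
  map_smul' r v := by
    ext i j
    fin_cases i <;> fin_cases j <;> simp <;> ring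

theorem symmMatrix_apply (v : Fin 3 → ℝ) :
    symmMatrix v = !![v 2 + v 1, v 0; v 0, v 2 - v 1] :=
  rfl

theorem symmMatrix_injective : Function.Injective symmMatrix := by
  intro v w h
  have h₀₀ : v 2 + v 1 = w 2 + w 1 := congrFun₂ h 0 0
  have h₀₁ : v 0 = w 0 := congrFun₂ h 0 1
  have h₁₁ : v 2 - v 1 = w 2 - w 1 := congrFun₂ h 1 1
  ext i
  fin_cases i
  · exact h₀₁
  · change v 1 = w 1
    linarith
  · change v 2 = w 2
    linarith

theorem symmMatrix_Phi_mulVec (A : Matrix (Fin 2) (Fin 2) ℝ) (v : Fin 3 → ℝ) :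
    symmMatrix (Phi A *ᵥ v) = A * symmMatrix v * Aᵀ := by
  ext i j
  fin_cases i <;> fin_cases j <;>
    simp [symmMatrix_apply, Phi, dotProduct, mul_apply, Fin.sum_univ_succ] <;> ring

section RealGram

variable {m n o p : Type*}

/-- The real part of the rank-one Hermitian matrix `u u*`, i.e. the Gram matrix of the entries of
`u` as vectors of the Euclidean plane `ℂ`. -/
def realGram (u : n → ℂ) : Matrix n n ℝ :=
  (vecMulVec u (star u)).map Complex.re

theorem realGram_apply (u : n → ℂ) (i j : n) : realGram u i j = (u i * star (u j)).re :=
  rfl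

theorem realGram_smul (k : ℂ) (u : n → ℂ) :
    realGram (k • u) = Complex.normSq k • realGram u := by
  ext i j
  have hk : k * u i * star (k * u j) = Complex.normSq k * (u i * star (u j)) := by
    rw [star_mul', mul_mul_mul_comm, Complex.star_def, Complex.mul_conj]
  simp only [realGram_apply, Pi.smul_apply, Matrix.smul_apply, smul_eq_mul, hk,
    Complex.re_ofReal_mul]

theorem map_re_map_ofReal_mul_mul [Fintype n] [Fintype o] (A : Matrix m n ℝ) (M : Matrix n o ℂ)
    (B : Matrix o p ℝ) :
    (A.map Complex.ofReal * M * B.map Complex.ofReal).map Complex.re =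
      A * M.map Complex.re * B := by
  ext i j
  simp [mul_apply]

theorem realGram_map_ofReal_mulVec [Fintype n] (A : Matrix m n ℝ) (u : n → ℂ) :
    realGram (A.map Complex.ofReal *ᵥ u) = A * realGram u * Aᵀ := by
  have hA : (A.map Complex.ofReal)ᴴ = Aᵀ.map Complex.ofReal := by
    ext i j
    simp
  simp only [realGram]
  rw [star_mulVec, hA, ← vecMulVec_mul, ← mul_vecMulVec, map_re_map_ofReal_mul_mul]

end RealGram

theorem symmMatrix_f {z : ℂ} (hz : z.im ≠ 0) : symmMatrix (f z) = z.im⁻¹ • realGram ![z, 1] := by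
  ext i j
  fin_cases i <;> fin_cases j <;> simp [symmMatrix_apply, realGram_apply, f] <;> field_simp <;> ring

theorem map_ofReal_mulVec_eq_denom_smul (g : GL (Fin 2) ℝ) {z : ℂ} (hz : denom g z ≠ 0) :
    g.val.map Complex.ofReal *ᵥ ![z, 1] = denom g z • ![num g z / denom g z, 1] := by
  have hnum : denom g z * (num g z / denom g z) = num g z :=
    mul_div_cancel₀ _ hz
  ext i
  fin_cases i
  · simpa [num, mulVec, dotProduct] using hnum.symm
  · simp [denom, mulVec, dotProduct]

theorem im_moebius_mul_pos (g : GL (Fin 2) ℝ) {z : ℂ} (hz : z.im ≠ 0) :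
    0 < (num g z / denom g z).im * (g.det.val * z.im) := by
  rw [moebius_im, div_mul_eq_mul_div]
  exact div_pos (mul_self_pos.mpr (mul_ne_zero g.det.ne_zero hz)) (normSq_denom_pos g hz)

theorem det_smul_f_moebius (g : GL (Fin 2) ℝ) {z : ℂ} (hz : z.im ≠ 0) :
    g.det.val • f (num g z / denom g z) = Phi g *ᵥ f z := by
  set w := num g z / denom g z with hw
  have hw_im : w.im ≠ 0 := left_ne_zero_of_mul (im_moebius_mul_pos g hz).ne'
  have hscale : g.det.val * w.im⁻¹ = z.im⁻¹ * Complex.normSq (denom g z) := by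
    have hdet := g.det.ne_zero
    have hdenom := normSq_denom_ne_zero g hz
    rw [hw, moebius_im]
    field_simp
  apply symmMatrix_injective
  calc symmMatrix (g.det.val • f w)
      = (g.det.val * w.im⁻¹) • realGram ![w, 1] := by
        rw [map_smul, symmMatrix_f hw_im, smul_smul]
    _ = z.im⁻¹ • realGram (denom g z • ![w, 1]) := by
        rw [hscale, realGram_smul, smul_smul]
    _ = z.im⁻¹ • (g.val * realGram ![z, 1] * g.valᵀ) := by
        rw [← map_ofReal_mulVec_eq_denom_smul g (denom_ne_zero_of_im g hz),
          realGram_map_ofReal_mulVec]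
    _ = g.val * symmMatrix (f z) * g.valᵀ := by
        rw [symmMatrix_f hz, Matrix.mul_smul, Matrix.smul_mul]
    _ = symmMatrix (Phi g *ᵥ f z) := (symmMatrix_Phi_mulVec g.val (f z)).symm

theorem stmt10_general (a b c d : ℝ) (h : a * d - b * c ≠ 0) (z : ℂ) (hz : z.im ≠ 0) :
    (c : ℂ) * z + d ≠ 0 ∧
    0 < (((a : ℂ) * z + b) / ((c : ℂ) * z + d)).im * ((a * d - b * c) * z.im) ∧
    (a * d - b * c) • f (((a : ℂ) * z + b) / ((c : ℂ) * z + d)) =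
      Phi !![a, b; c, d] *ᵥ f z := by
  have hdet : det !![a, b; c, d] = a * d - b * c := det_fin_two_of a b c d
  let g : GL (Fin 2) ℝ := .mkOfDetNeZero !![a, b; c, d] (hdet ▸ h)
  rw [← hdet]
  exact ⟨denom_ne_zero_of_im g hz, im_moebius_mul_pos g hz, det_smul_f_moebius g hz⟩

/-- `f` is `Φ`-equivariant: for `A = (a,b;c,d) ∈ SL(2,ℝ)` and `z` in the upper
half-plane, `cz + d ≠ 0`, the Möbius image `(az+b)/(cz+d)` lies in the upper
half-plane, and `f((az+b)/(cz+d)) = Φ(A)·f(z)`. -/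
theorem stmt10 (a b c d : ℝ) (h : a * d - b * c = 1) (z : ℂ) (hz : 0 < z.im) :
    (c : ℂ) * z + d ≠ 0 ∧
    0 < (((a : ℂ) * z + b) / ((c : ℂ) * z + d)).im ∧
    f (((a : ℂ) * z + b) / ((c : ℂ) * z + d)) =
      (Phi !![a, b; c, d]).mulVec (f z) := by
  simpa [h, hz] using stmt10_general a b c d (h ▸ one_ne_zero) z hz.ne'
end
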